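/- arXiv:math/0305371 — 3 statements merged into one kernel-verified Lean document; each statement's English description precedes it below -/
import Mathlib

section
/- Let (G,P) be a quasi-lattice ordered group and (E,φ) a finitely aligned product system of graphs over P. For every finite subset F of E¹: (1) F ⊆ ∨F; (2) ∨F is the disjoint union, over v ∈ s(F), of the sets ∨{λ ∈ F : s(λ) = v}; (3) ∨F is finite; (4) if G ⊆ ∨F then MCE(G) ⊆ ∨F. -/
open scoped Classical

noncomputable section

namespace PSG

variable {G : Type*} [Group G] {Λ : Type*}

/-- `g ≤ h` in the left-invariant partial order induced by the submonoid `P`. -/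
def qle (P : Submonoid G) (g h : G) : Prop := g⁻¹ * h ∈ P

/-- `r` is a common upper bound of `p` and `q` in `P`. -/
def IsUB (P : Submonoid G) (p q r : G) : Prop := r ∈ P ∧ qle P p r ∧ qle P q r

/-- `r` is the least common upper bound of `p` and `q` in `P`. -/
def IsLUB2 (P : Submonoid G) (p q r : G) : Prop :=
  IsUB P p q r ∧ ∀ r', IsUB P p q r' → qle P r r'

/-- `r` is the least upper bound in `P` of the set of degrees `D`. -/
def IsLUBFam (P : Submonoid G) (D : Set G) (r : G) : Prop :=
  r ∈ P ∧ (∀ p ∈ D, qle P p r) ∧ ∀ r' ∈ P, (∀ p ∈ D, qle P p r') → qle P r r'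

/-- `(G, P)` is quasi-lattice ordered: `P ∩ P⁻¹ = {1}` and every pair of elements of `P`
with a common upper bound in `P` has a least upper bound in `P`. -/
def QuasiLatticeOrdered (P : Submonoid G) : Prop :=
  (∀ g ∈ P, g⁻¹ ∈ P → g = 1) ∧
    ∀ p ∈ P, ∀ q ∈ P, (∃ r, IsUB P p q r) → ∃ r, IsLUB2 P p q r

/-- A product system of graphs over `P`, encoded on a single edge set `Λ` (which contains the
vertices as the elements of degree `1`), with degree map `d`, source and range maps `src`, `rng`
(valued in vertices), and partial multiplication `mul` (meaningful when `rng a = src b`). -/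
structure IsProductSystem (P : Submonoid G) (d : Λ → G) (src rng : Λ → Λ)
    (mul : Λ → Λ → Λ) : Prop where
  countable : Countable Λ
  d_mem : ∀ a, d a ∈ P
  d_src : ∀ a, d (src a) = 1
  d_rng : ∀ a, d (rng a) = 1
  src_vertex : ∀ v, d v = 1 → src v = v
  rng_vertex : ∀ v, d v = 1 → rng v = v
  d_mul : ∀ a b, rng a = src b → d (mul a b) = d a * d b
  src_mul : ∀ a b, rng a = src b → src (mul a b) = src a
  rng_mul : ∀ a b, rng a = src b → rng (mul a b) = rng b
  mul_assoc' : ∀ a b c, rng a = src b → rng b = src c →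
    mul (mul a b) c = mul a (mul b c)
  src_mul_self : ∀ a, mul (src a) a = a
  mul_rng_self : ∀ a, mul a (rng a) = a
  factor : ∀ p q : G, p ∈ P → q ∈ P → ∀ c, d c = p * q →
    ∃! ab : Λ × Λ, d ab.1 = p ∧ d ab.2 = q ∧ rng ab.1 = src ab.2 ∧ mul ab.1 ab.2 = c

/-- `a` is an initial segment of `c`: `c = a • b` for some (necessarily unique) `b`. -/
def IsInit (src rng : Λ → Λ) (mul : Λ → Λ → Λ) (a c : Λ) : Prop :=
  ∃ b, rng a = src b ∧ mul a b = c

/-- The set of minimal common extensions of `μ` and `ν`. -/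
def MCE (P : Submonoid G) (d : Λ → G) (src rng : Λ → Λ) (mul : Λ → Λ → Λ)
    (μ ν : Λ) : Set Λ :=
  {γ | IsInit src rng mul μ γ ∧ IsInit src rng mul ν γ ∧ IsLUB2 P (d μ) (d ν) (d γ)}

/-- The product system is finitely aligned. -/
def FinitelyAligned (P : Submonoid G) (d : Λ → G) (src rng : Λ → Λ)
    (mul : Λ → Λ → Λ) : Prop :=
  ∀ μ ν : Λ, (MCE P d src rng mul μ ν).Finite

/-- The set of minimal common extensions of a set `S` of edges. -/
def MCEset (P : Submonoid G) (d : Λ → G) (src rng : Λ → Λ) (mul : Λ → Λ → Λ)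
    (S : Set Λ) : Set Λ :=
  {γ | (∀ α ∈ S, IsInit src rng mul α γ) ∧ IsLUBFam P (d '' S) (d γ)}

/-- `∨F`: the union of `MCE(S)` over the nonempty subsets `S ⊆ F`. -/
def vee (P : Submonoid G) (d : Λ → G) (src rng : Λ → Λ) (mul : Λ → Λ → Λ)
    (F : Finset Λ) : Set Λ :=
  {γ | ∃ S : Finset Λ, S.Nonempty ∧ S ⊆ F ∧ γ ∈ MCEset P d src rng mul ↑S}

/-- Given that `a` is an initial segment of `c`, the (unique) complementary segment;
junk value `c` otherwise. -/
def tail (src rng : Λ → Λ) (mul : Λ → Λ → Λ) (a c : Λ) : Λ :=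
  if h : IsInit src rng mul a c then h.choose else c

section CstarFamilies

variable (P : Submonoid G) (d : Λ → G) (src rng : Λ → Λ) (mul : Λ → Λ → Λ)
variable {B : Type*} [CStarAlgebra B] [PartialOrder B] [StarOrderedRing B]

/-- A Toeplitz `E`-family in a C*-algebra `B` (conditions (1)–(4)). -/
structure IsToeplitzFamily (t : Λ → B) : Prop where
  vertex_sa : ∀ v, d v = 1 → IsSelfAdjoint (t v)
  vertex_idem : ∀ v, d v = 1 → t v * t v = t v
  vertex_orth : ∀ v w, d v = 1 → d w = 1 → v ≠ w → t v * t w = 0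
  mul_eq : ∀ a b, rng a = src b → t a * t b = t (mul a b)
  star_mul_self : ∀ a, star (t a) * t a = t (rng a)
  dom : ∀ p : G, p ∈ P → p ≠ 1 → ∀ v, d v = 1 → ∀ F : Finset Λ,
    (∀ a ∈ F, d a = p ∧ src a = v) → (∑ a ∈ F, t a * star (t a)) ≤ t v

/-- The Nica-covariance/Cuntz–Krieger relation (5):
`tμ* tν = ∑_{γ = μα = νβ ∈ MCE(μ,ν)} tα tβ*`. -/
def TCKrel (t : Λ → B) : Prop :=
  ∀ μ ν : Λ, ∀ M : Finset Λ, ↑M = MCE P d src rng mul μ ν →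
    star (t μ) * t ν =
      ∑ γ ∈ M, t (tail src rng mul μ γ) * star (t (tail src rng mul ν γ))

/-- A Toeplitz–Cuntz–Krieger `E`-family: conditions (1)–(5). -/
def IsTCKFamily (t : Λ → B) : Prop :=
  IsToeplitzFamily P d src rng mul t ∧ TCKrel P d src rng mul t

/-- Condition (†): for every finite `R ⊆ P∖{1}`, every vertex `v`, and all finite sets
`F_p ⊆ s_p⁻¹(v)` (`p ∈ R`), the product `∏_{p ∈ R} (t_v − ∑_{a ∈ F_p} t_a t_a*)` is nonzero.
(The factors commute, so the product is stated for an arbitrary enumeration of `R`.) -/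
def Dagger (t : Λ → B) : Prop :=
  ∀ R : List G, R.Nodup → (∀ p ∈ R, p ∈ P ∧ p ≠ 1) →
    ∀ v, d v = 1 → ∀ Fp : G → Finset Λ,
      (∀ p ∈ R, ∀ a ∈ Fp p, d a = p ∧ src a = v) →
        (R.map fun p => t v - ∑ a ∈ Fp p, t a * star (t a)).prod ≠ 0

/-- The projection `Q^{∨F}_l = t_l t_l* ∏_{l α ∈ ∨F, d α ≠ 1} (t_{s(l)} − t_{lα} t_{lα}*)`.
(The factors commute, so the product is computed over an arbitrary enumeration.) -/
def Qproj (t : Λ → B) (F : Finset Λ) (l : Λ) : B :=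
  if h : {α : Λ | d α ≠ 1 ∧ rng l = src α ∧ mul l α ∈ vee P d src rng mul F}.Finite then
    t l * star (t l) *
      (h.toFinset.toList.map fun α =>
        t (src l) - t (mul l α) * star (t (mul l α))).prod
  else 0

end CstarFamilies

/-- The positive cone `ℕ^k` inside `ℤ^k` (written multiplicatively). -/
def posCone (k : ℕ) : Submonoid (Multiplicative (Fin k → ℤ)) where
  carrier := {g | ∀ i, 0 ≤ Multiplicative.toAdd g i}
  mul_mem' := by
    intro a b ha hb i
    simpa using add_nonneg (ha i) (hb i)
  one_mem' := by
    intro i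
    simp

/-- The `i`-th standard generator of `ℕ^k ⊆ ℤ^k`. -/
def egen (k : ℕ) (i : Fin k) : Multiplicative (Fin k → ℤ) :=
  Multiplicative.ofAdd (Pi.single i 1)

end PSG
namespace PSG

section Order

variable {G : Type*} [Group G] {P : Submonoid G}

theorem qle_refl (g : G) : qle P g g := by
  simp [qle, P.one_mem]

theorem qle.trans {g h k : G} (hgh : qle P g h) (hhk : qle P h k) : qle P g k := by
  have hmul := P.mul_mem hgh hhk
  rwa [mul_assoc, mul_inv_cancel_left] at hmul

theorem QuasiLatticeOrdered.qle_antisymm (hQLO : QuasiLatticeOrdered P) {g h : G}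
    (hgh : qle P g h) (hhg : qle P h g) : g = h := by
  have hone : g⁻¹ * h = 1 := hQLO.1 _ hgh (by simpa [qle] using hhg)
  exact inv_mul_eq_one.mp hone

theorem isLUBFam_singleton {p : G} (hp : p ∈ P) : IsLUBFam P {p} p :=
  ⟨hp, by rintro _ rfl; exact qle_refl _, fun _ _ h => h p rfl⟩

theorem IsLUBFam.insert_of_isLUB2 {D : Set G} {p q r : G} (hq : IsLUBFam P D q)
    (hr : IsLUB2 P p q r) : IsLUBFam P (insert p D) r := by
  obtain ⟨⟨hrP, hpr, hqr⟩, hmin⟩ := hr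
  refine ⟨hrP, ?_, fun r' hr' h => hmin r' ⟨hr', h p (Or.inl rfl), ?_⟩⟩
  · rintro x (rfl | hx)
    · exact hpr
    · exact (hq.2.1 x hx).trans hqr
  · exact hq.2.2 r' hr' fun x hx => h x (Or.inr hx)

theorem IsLUBFam.isLUB2_of_insert {D : Set G} {p q r : G} (hr : IsLUBFam P (insert p D) r)
    (hq : IsLUBFam P D q) : IsLUB2 P p q r := by
  refine ⟨⟨hr.1, hr.2.1 p (Or.inl rfl),
    hq.2.2 r hr.1 fun x hx => hr.2.1 x (Or.inr hx)⟩, ?_⟩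
  rintro r' ⟨hr', hpr', hqr'⟩
  refine hr.2.2 r' hr' ?_
  rintro x (rfl | hx)
  · exact hpr'
  · exact (hq.2.1 x hx).trans hqr'

theorem isLUBFam_empty : IsLUBFam P ∅ 1 :=
  ⟨P.one_mem, by simp, fun r hr _ => by simpa [qle] using hr⟩

/-- In a quasi-lattice ordered group, a finite family in `P` that is bounded above in `P`
has a least upper bound in `P`. -/
theorem QuasiLatticeOrdered.exists_isLUBFam (hQLO : QuasiLatticeOrdered P) {D : Set G}
    (hfin : D.Finite) (hDP : ∀ p ∈ D, p ∈ P) {r : G} (hrP : r ∈ P)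
    (hr : ∀ p ∈ D, qle P p r) : ∃ q, IsLUBFam P D q := by
  induction D, hfin using Set.Finite.induction_on with
  | empty => exact ⟨1, isLUBFam_empty⟩
  | @insert p D _ _ ih =>
    obtain ⟨q, hq⟩ := ih (fun x hx => hDP x (Or.inr hx)) fun x hx => hr x (Or.inr hx)
    have hqr : qle P q r := hq.2.2 r hrP fun x hx => hr x (Or.inr hx)
    obtain ⟨s, hs⟩ :=
      hQLO.2 p (hDP p (Or.inl rfl)) q hq.1 ⟨r, hrP, hr p (Or.inl rfl), hqr⟩
    exact ⟨s, hq.insert_of_isLUB2 hs⟩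

end Order

section ProductSystem

variable {G : Type*} [Group G] {Λ : Type*} {P : Submonoid G} {d : Λ → G} {src rng : Λ → Λ}
  {mul : Λ → Λ → Λ} {a b c : Λ}

namespace IsProductSystem

theorem isInit_refl (hPS : IsProductSystem P d src rng mul) (a : Λ) : IsInit src rng mul a a :=
  ⟨rng a, (hPS.src_vertex _ (hPS.d_rng a)).symm, hPS.mul_rng_self a⟩

theorem isInit_trans (hPS : IsProductSystem P d src rng mul) (hab : IsInit src rng mul a b)
    (hbc : IsInit src rng mul b c) : IsInit src rng mul a c := by
  obtain ⟨x, hx, rfl⟩ := hab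
  obtain ⟨y, hy, rfl⟩ := hbc
  rw [hPS.rng_mul _ _ hx] at hy
  exact ⟨mul x y, by rw [hPS.src_mul _ _ hy, hx], (hPS.mul_assoc' _ _ _ hx hy).symm⟩

theorem src_eq_of_isInit (hPS : IsProductSystem P d src rng mul)
    (hab : IsInit src rng mul a b) : src b = src a := by
  obtain ⟨x, hx, rfl⟩ := hab
  exact hPS.src_mul _ _ hx

theorem qle_of_isInit (hPS : IsProductSystem P d src rng mul)
    (hab : IsInit src rng mul a b) : qle P (d a) (d b) := by
  obtain ⟨x, hx, rfl⟩ := hab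
  simpa [qle, hPS.d_mul _ _ hx] using hPS.d_mem x

theorem exists_isInit_of_qle (hPS : IsProductSystem P d src rng mul) {p : G} (hp : p ∈ P)
    (hpc : qle P p (d c)) : ∃ b, d b = p ∧ IsInit src rng mul b c := by
  obtain ⟨⟨b, x⟩, ⟨hb, -, hx, hbx⟩, -⟩ :=
    hPS.factor p (p⁻¹ * d c) hp hpc c (mul_inv_cancel_left _ _).symm
  exact ⟨b, hb, x, hx, hbx⟩

/-- An initial segment is determined by its degree. -/
theorem isInit_unique (hPS : IsProductSystem P d src rng mul) (hac : IsInit src rng mul a c)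
    (hbc : IsInit src rng mul b c) (hd : d a = d b) : a = b := by
  obtain ⟨x, hx, hax⟩ := hac
  obtain ⟨y, hy, hby⟩ := hbc
  have hcx : d c = d a * d x := by rw [← hax, hPS.d_mul _ _ hx]
  have hcy : d c = d a * d y := by rw [← hby, hPS.d_mul _ _ hy, hd]
  have hxy : d y = d x := mul_left_cancel (hcy.symm.trans hcx)
  exact congrArg Prod.fst <| (hPS.factor _ _ (hPS.d_mem a) (hPS.d_mem x) c hcx).unique
    (y₁ := (a, x)) (y₂ := (b, y)) ⟨rfl, rfl, hx, hax⟩ ⟨hd.symm, hxy, hy, hby⟩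

theorem isInit_of_qle (hPS : IsProductSystem P d src rng mul) (hac : IsInit src rng mul a c)
    (hbc : IsInit src rng mul b c) (hd : qle P (d a) (d b)) : IsInit src rng mul a b := by
  obtain ⟨a', ha', hab⟩ := hPS.exists_isInit_of_qle (hPS.d_mem a) hd
  rwa [← hPS.isInit_unique (hPS.isInit_trans hab hbc) hac ha']

theorem mem_MCEset_singleton (hPS : IsProductSystem P d src rng mul) (a : Λ) :
    a ∈ MCEset P d src rng mul {a} := by
  refine ⟨?_, ?_⟩
  · rintro _ rfl
    exact hPS.isInit_refl _
  · rw [Set.image_singleton]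
    exact isLUBFam_singleton (hPS.d_mem a)

theorem MCEset_singleton_subset (hPS : IsProductSystem P d src rng mul)
    (hQLO : QuasiLatticeOrdered P) (a : Λ) : MCEset P d src rng mul {a} ⊆ {a} := by
  rintro c ⟨hinit, -, hub, hmin⟩
  rw [Set.image_singleton] at hub hmin
  have hd : d c = d a := hQLO.qle_antisymm
    (hmin _ (hPS.d_mem a) (by rintro _ rfl; exact qle_refl _)) (hub _ rfl)
  exact hPS.isInit_unique (hPS.isInit_refl c) (hinit a rfl) hd

/-- A minimal common extension of `insert a S` is a minimal common extension of `a` and of some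
minimal common extension of `S`. -/
theorem MCEset_insert_subset (hPS : IsProductSystem P d src rng mul)
    (hQLO : QuasiLatticeOrdered P) (a : Λ) {S : Set Λ} (hS : S.Finite) :
    MCEset P d src rng mul (insert a S) ⊆
      ⋃ b ∈ MCEset P d src rng mul S, MCE P d src rng mul a b := by
  rintro c ⟨hinit, hlub⟩
  rw [Set.image_insert_eq] at hlub
  have hub : ∀ p ∈ d '' S, qle P p (d c) := fun p hp => hlub.2.1 p (Or.inr hp)
  obtain ⟨q, hq⟩ := hQLO.exists_isLUBFam (hS.image d)
    (by rintro _ ⟨x, -, rfl⟩; exact hPS.d_mem x) hlub.1 hub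
  obtain ⟨b, rfl, hbc⟩ := hPS.exists_isInit_of_qle hq.1 (hq.2.2 _ hlub.1 hub)
  have hbS : b ∈ MCEset P d src rng mul S :=
    ⟨fun x hx => hPS.isInit_of_qle (hinit x (Or.inr hx)) hbc (hq.2.1 _ ⟨x, hx, rfl⟩), hq⟩
  exact Set.mem_biUnion hbS ⟨hinit a (Or.inl rfl), hbc, hlub.isLUB2_of_insert hq⟩

theorem finite_MCEset (hPS : IsProductSystem P d src rng mul) (hQLO : QuasiLatticeOrdered P)
    (hFA : FinitelyAligned P d src rng mul) {S : Finset Λ} (hS : S.Nonempty) :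
    (MCEset P d src rng mul (S : Set Λ)).Finite := by
  induction hS using Finset.Nonempty.cons_induction with
  | singleton a =>
    rw [Finset.coe_singleton]
    exact (Set.finite_singleton a).subset (hPS.MCEset_singleton_subset hQLO a)
  | cons a S _ _ ih =>
    rw [Finset.coe_cons]
    exact (ih.biUnion fun b _ => hFA a b).subset
      (hPS.MCEset_insert_subset hQLO a S.finite_toSet)

theorem subset_vee (hPS : IsProductSystem P d src rng mul) (F : Finset Λ) :
    ↑F ⊆ vee P d src rng mul F := fun a ha =>
  ⟨{a}, Finset.singleton_nonempty a, Finset.singleton_subset_iff.mpr ha, by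
    simpa using hPS.mem_MCEset_singleton a⟩

theorem finite_vee (hPS : IsProductSystem P d src rng mul) (hQLO : QuasiLatticeOrdered P)
    (hFA : FinitelyAligned P d src rng mul) (F : Finset Λ) :
    (vee P d src rng mul F).Finite := by
  have hfin : {S : Finset Λ | S.Nonempty ∧ S ⊆ F}.Finite :=
    F.powerset.finite_toSet.subset fun S hS => by simpa using hS.2
  refine (hfin.biUnion fun S hS => hPS.finite_MCEset hQLO hFA hS.1).subset ?_
  rintro c ⟨S, hS, hSF, hc⟩
  exact Set.mem_biUnion (show S ∈ {S : Finset Λ | S.Nonempty ∧ S ⊆ F} from ⟨hS, hSF⟩) hc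

theorem src_eq_of_mem_vee_filter (hPS : IsProductSystem P d src rng mul) {F : Finset Λ}
    {v : Λ} (hc : c ∈ vee P d src rng mul (F.filter fun a => src a = v)) : src c = v := by
  obtain ⟨S, ⟨a, ha⟩, hSF, hc⟩ := hc
  rw [hPS.src_eq_of_isInit (hc.1 a ha)]
  exact (Finset.mem_filter.mp (hSF ha)).2

theorem vee_eq_biUnion (hPS : IsProductSystem P d src rng mul) (F : Finset Λ) :
    vee P d src rng mul F =
      ⋃ v ∈ src '' (↑F : Set Λ), vee P d src rng mul (F.filter fun a => src a = v) := by
  refine Set.Subset.antisymm ?_ (Set.iUnion₂_subset ?_)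
  · rintro c ⟨S, ⟨a, ha⟩, hSF, hc⟩
    have hsrc : ∀ x ∈ S, src x = src c := fun x hx => (hPS.src_eq_of_isInit (hc.1 x hx)).symm
    exact Set.mem_biUnion (⟨a, hSF ha, hsrc a ha⟩ : src c ∈ src '' (↑F : Set Λ))
      ⟨S, ⟨a, ha⟩, fun x hx => Finset.mem_filter.mpr ⟨hSF hx, hsrc x hx⟩, hc⟩
  · rintro v - c ⟨S, hS, hSF, hc⟩
    exact ⟨S, hS, hSF.trans (Finset.filter_subset _ _), hc⟩

theorem MCEset_subset_vee (hPS : IsProductSystem P d src rng mul) {F S : Finset Λ}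
    (hS : S.Nonempty) (hSF : ↑S ⊆ vee P d src rng mul F) :
    MCEset P d src rng mul ↑S ⊆ vee P d src rng mul F := by
  rintro c ⟨hinit, hcP, hub, hmin⟩
  choose! T hTne hTF hT using hSF
  refine ⟨S.biUnion T, hS.biUnion hTne, Finset.biUnion_subset.mpr hTF, ?_, hcP, ?_, ?_⟩
  · intro x hx
    obtain ⟨a, ha, hxa⟩ := Finset.mem_biUnion.mp hx
    exact hPS.isInit_trans ((hT ha).1 x hxa) (hinit a ha)
  · rintro _ ⟨x, hx, rfl⟩
    obtain ⟨a, ha, hxa⟩ := Finset.mem_biUnion.mp hx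
    exact hPS.qle_of_isInit (hPS.isInit_trans ((hT ha).1 x hxa) (hinit a ha))
  · intro r hr hrub
    refine hmin r hr ?_
    rintro _ ⟨a, ha, rfl⟩
    refine (hT ha).2.2.2 r hr ?_
    rintro _ ⟨x, hx, rfl⟩
    exact hrub _ ⟨x, Finset.mem_biUnion.mpr ⟨a, ha, hx⟩, rfl⟩

end IsProductSystem

end ProductSystem

/-- Lemma 7.2 (Lemma `vee F`): basic properties of `∨F`. -/
theorem stmt0 {G : Type*} [Group G] {Λ : Type*} (P : Submonoid G)
    (hQLO : QuasiLatticeOrdered P)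
    (d : Λ → G) (src rng : Λ → Λ) (mul : Λ → Λ → Λ)
    (hPS : IsProductSystem P d src rng mul)
    (hFA : FinitelyAligned P d src rng mul)
    (F : Finset Λ) :
    (↑F ⊆ vee P d src rng mul F) ∧
    (vee P d src rng mul F =
      ⋃ v ∈ src '' (↑F : Set Λ),
        vee P d src rng mul (F.filter fun a => src a = v)) ∧
    ((src '' (↑F : Set Λ)).PairwiseDisjoint fun v =>
        vee P d src rng mul (F.filter fun a => src a = v)) ∧
    (vee P d src rng mul F).Finite ∧
    (∀ S : Finset Λ, S.Nonempty → ↑S ⊆ vee P d src rng mul F →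
      MCEset P d src rng mul ↑S ⊆ vee P d src rng mul F) := by
  refine ⟨hPS.subset_vee F, hPS.vee_eq_biUnion F, ?_, hPS.finite_vee hQLO hFA F,
    fun S hS hSF => hPS.MCEset_subset_vee hS hSF⟩
  intro v _ w _ hvw
  exact Set.disjoint_left.mpr fun c hcv hcw =>
    hvw ((hPS.src_eq_of_mem_vee_filter hcv).symm.trans (hPS.src_eq_of_mem_vee_filter hcw))

end PSG
end
end

section
/- A product system (E,φ) of graphs over ℕ^k is finitely aligned if and only if MCE(μ,ν) is finite for every pair of edges μ ∈ E¹_{e_i} and ν ∈ E¹_{e_j} with i ≠ j. -/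
open scoped Classical

noncomputable section

namespace PSG

section General

variable {G : Type*} [Group G] {Λ : Type*} {P : Submonoid G} {d : Λ → G} {src rng : Λ → Λ}
  {mul : Λ → Λ → Λ}

/-- Two factorisations of the same edge whose first factors have equal degrees coincide. -/
theorem IsProductSystem.factor_unique (h : IsProductSystem P d src rng mul) {a b a' b' : Λ}
    (hab : rng a = src b) (hab' : rng a' = src b') (hd : d a = d a')
    (he : mul a b = mul a' b') : a = a' ∧ b = b' := by
  have hdb : d b' = d b := by
    have h1 := congrArg d he
    rw [h.d_mul _ _ hab, h.d_mul _ _ hab', hd] at h1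
    exact (mul_left_cancel h1).symm
  obtain ⟨_, _, hu⟩ := h.factor (d a) (d b) (h.d_mem a) (h.d_mem b) (mul a b) (h.d_mul _ _ hab)
  have h1 := hu (a, b) ⟨rfl, rfl, hab, rfl⟩
  have h2 := hu (a', b') ⟨hd.symm, hdb, hab', he.symm⟩
  exact Prod.ext_iff.mp (h1.trans h2.symm)

theorem IsProductSystem.exists_factor (h : IsProductSystem P d src rng mul) {c : Λ} {p q : G}
    (hp : p ∈ P) (hq : q ∈ P) (hc : d c = p * q) :
    ∃ a b, d a = p ∧ d b = q ∧ rng a = src b ∧ mul a b = c := by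
  obtain ⟨⟨a, b⟩, hab, _⟩ := h.factor p q hp hq c hc
  exact ⟨a, b, hab⟩

/-- An initial segment of `mul b c` of degree at most `d b` is an initial segment of `b`. -/
theorem IsProductSystem.isInit_of_qle_s1 (h : IsProductSystem P d src rng mul) {a b c : Λ}
    (hbc : rng b = src c) (ha : IsInit src rng mul a (mul b c)) (hle : qle P (d a) (d b)) :
    IsInit src rng mul a b := by
  obtain ⟨x, hax, hx⟩ := ha
  obtain ⟨a', y, ha', -, hay, rfl⟩ := h.exists_factor (c := b) (h.d_mem a) hle (by group)
  rw [h.rng_mul _ _ hay] at hbc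
  rw [h.mul_assoc' _ _ _ hay hbc] at hx
  obtain ⟨rfl, -⟩ := h.factor_unique hax (by rw [hay, h.src_mul _ _ hbc]) ha'.symm hx
  exact ⟨y, hay, rfl⟩

theorem MCE_comm (μ ν : Λ) : MCE P d src rng mul μ ν = MCE P d src rng mul ν μ := by
  ext γ
  simp only [MCE, IsLUB2, IsUB, Set.mem_ofPred_eq]
  grind

end General

section PositiveCone

variable {k : ℕ} {Λ : Type*} {d : Λ → Multiplicative (Fin k → ℤ)} {src rng : Λ → Λ}
  {mul : Λ → Λ → Λ}

theorem mem_posCone {g : Multiplicative (Fin k → ℤ)} :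
    g ∈ posCone k ↔ 0 ≤ g.toAdd := Iff.rfl

theorem qle_posCone {g h : Multiplicative (Fin k → ℤ)} :
    qle (posCone k) g h ↔ g.toAdd ≤ h.toAdd := by
  rw [qle, mem_posCone, toAdd_mul, toAdd_inv, neg_add_eq_sub, sub_nonneg]

/-- Least upper bounds in `ℕ^k` are coordinatewise maxima. -/
theorem isLUB2_posCone {p q r : Multiplicative (Fin k → ℤ)} (hp : p ∈ posCone k) :
    IsLUB2 (posCone k) p q r ↔ r.toAdd = p.toAdd ⊔ q.toAdd := by
  simp only [IsLUB2, IsUB, qle_posCone, mem_posCone] at *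
  constructor
  · rintro ⟨⟨-, h1, h2⟩, h3⟩
    exact le_antisymm (h3 (Multiplicative.ofAdd (p.toAdd ⊔ q.toAdd))
      ⟨hp.trans le_sup_left, le_sup_left, le_sup_right⟩) (sup_le h1 h2)
  · intro h
    rw [h]
    exact ⟨⟨hp.trans le_sup_left, le_sup_left, le_sup_right⟩, fun r' h' => sup_le h'.2.1 h'.2.2⟩

theorem mem_MCE_iff (h : IsProductSystem (posCone k) d src rng mul) {μ ν γ : Λ} :
    γ ∈ MCE (posCone k) d src rng mul μ ν ↔ IsInit src rng mul μ γ ∧ IsInit src rng mul ν γ ∧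
      (d γ).toAdd = (d μ).toAdd ⊔ (d ν).toAdd := by
  rw [← isLUB2_posCone (h.d_mem μ)]
  rfl

theorem MCE_finite_of_le (h : IsProductSystem (posCone k) d src rng mul) {μ ν : Λ}
    (hle : (d μ).toAdd ≤ (d ν).toAdd) : (MCE (posCone k) d src rng mul μ ν).Finite := by
  refine (Set.finite_singleton ν).subset fun γ hγ => ?_
  obtain ⟨-, ⟨b, hb, rfl⟩, hd⟩ := (mem_MCE_iff h).1 hγ
  rw [sup_eq_right.2 hle, h.d_mul _ _ hb, toAdd_mul, add_eq_left] at hd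
  rw [Set.mem_singleton_iff, ← h.src_vertex b hd, ← hb, h.mul_rng_self]

/-- Finiteness of `MCE (mul μ f) ν`, from finiteness of `MCE μ ν` and of the sets `MCE f α`
where `mul μ α` ranges over `MCE μ ν`. -/
theorem MCE_mul_finite (h : IsProductSystem (posCone k) d src rng mul) {μ f ν : Λ}
    (hμf : rng μ = src f) (hμν : (MCE (posCone k) d src rng mul μ ν).Finite)
    (hf : ∀ α, (d α).toAdd = (d μ).toAdd ⊔ (d ν).toAdd - (d μ).toAdd →
      (MCE (posCone k) d src rng mul f α).Finite) :
    (MCE (posCone k) d src rng mul (mul μ f) ν).Finite := by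
  have hT : {α | rng μ = src α ∧ mul μ α ∈ MCE (posCone k) d src rng mul μ ν}.Finite :=
    Set.Finite.of_injOn (f := mul μ) (fun α hα => hα.2)
      (fun α hα β hβ he => (h.factor_unique hα.1 hβ.1 rfl he).2) hμν
  refine (hT.biUnion (t := fun α => mul μ '' MCE (posCone k) d src rng mul f α) ?_).subset ?_
  · rintro α ⟨hα, hα'⟩
    refine (hf α ?_).image _
    have hd := ((mem_MCE_iff h).1 hα').2.2
    rw [h.d_mul _ _ hα, toAdd_mul] at hd
    exact eq_sub_of_add_eq' hd
  · intro γ hγ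
    obtain ⟨⟨δ, hδ, rfl⟩, hν, hd⟩ := (mem_MCE_iff h).1 hγ
    rw [h.rng_mul _ _ hμf] at hδ
    have hμfδ : rng μ = src (mul f δ) := by rw [hμf, h.src_mul _ _ hδ]
    rw [h.mul_assoc' _ _ _ hμf hδ] at hν hd ⊢
    rw [h.d_mul _ _ hμf, toAdd_mul] at hd
    have hf0 : 0 ≤ (d f).toAdd := h.d_mem f
    have hle : (d μ).toAdd ⊔ (d ν).toAdd ≤ (d (mul μ (mul f δ))).toAdd := by
      rw [hd]
      exact sup_le_sup_right (le_add_of_nonneg_right hf0) _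
    obtain ⟨σ, β, hσ, -, hσβ, hσβγ⟩ := h.exists_factor (c := mul μ (mul f δ))
      (p := Multiplicative.ofAdd ((d μ).toAdd ⊔ (d ν).toAdd))
      (mem_posCone.2 (le_trans (h.d_mem μ) le_sup_left))
      (qle_posCone.2 hle) (mul_inv_cancel_left _ _).symm
    obtain ⟨α, hα, rfl⟩ : IsInit src rng mul μ σ := h.isInit_of_qle_s1 hσβ
      (hσβγ ▸ ⟨_, hμfδ, rfl⟩) (qle_posCone.2 (by rw [hσ]; exact le_sup_left))
    have hνσ : IsInit src rng mul ν (mul μ α) := h.isInit_of_qle_s1 hσβ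
      (hσβγ ▸ hν) (qle_posCone.2 (by rw [hσ]; exact le_sup_right))
    rw [h.rng_mul _ _ hα] at hσβ
    rw [h.mul_assoc' _ _ _ hα hσβ] at hσβγ
    have hαβ := (h.factor_unique (by rw [hα, h.src_mul _ _ hσβ]) hμfδ rfl hσβγ).2
    refine Set.mem_biUnion (x := α) ⟨hα, (mem_MCE_iff h).2 ⟨⟨α, hα, rfl⟩, hνσ, ?_⟩⟩
      ⟨mul f δ, (mem_MCE_iff h).2 ⟨⟨δ, hδ, rfl⟩, ⟨β, hσβ, hαβ⟩, ?_⟩, rfl⟩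
    · rw [hσ]; rfl
    · rw [h.d_mul _ _ hα] at hσ
      rw [h.d_mul _ _ hμfδ, toAdd_mul] at hd
      have hσ' : (d μ).toAdd + (d α).toAdd = (d μ).toAdd ⊔ (d ν).toAdd := hσ
      funext i
      have h1 := congrFun hσ' i
      have h2 := congrFun hd i
      have h3 := hf0 i
      simp only [Pi.add_apply, Pi.sup_apply, Pi.zero_apply] at h1 h2 h3 ⊢
      omega

/-- Induction on edges by appending edges whose degree is a generator. -/
theorem IsProductSystem.induction_right (h : IsProductSystem (posCone k) d src rng mul)
    {C : Λ → Prop} (vertex : ∀ v, d v = 1 → C v)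
    (append : ∀ μ f i, rng μ = src f → d f = egen k i → C μ → C (mul μ f)) (μ : Λ) : C μ := by
  induction hn : (∑ i, (d μ).toAdd i).toNat using Nat.strong_induction_on generalizing μ with
  | _ n ih =>
  have hμ : ∀ i, 0 ≤ (d μ).toAdd i := h.d_mem μ
  by_cases hv : d μ = 1
  · exact vertex μ hv
  obtain ⟨i, hi⟩ : ∃ i, (d μ).toAdd i ≠ 0 := by
    by_contra! h0
    exact hv (funext h0)
  have hegen : egen k i ∈ posCone k :=
    mem_posCone.2 (Pi.single_nonneg.2 zero_le_one)
  have hrest : d μ * (egen k i)⁻¹ ∈ posCone k := by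
    rw [_root_.mul_comm]
    refine qle_posCone.2 fun j => ?_
    have := hμ i
    rcases eq_or_ne j i with rfl | hj
    · simp only [egen, toAdd_ofAdd, Pi.single_eq_same]
      omega
    · simpa [egen, hj] using hμ j
  obtain ⟨ν, f, hν, hf, hνf, rfl⟩ := h.exists_factor (c := μ) hrest hegen (by group)
  refine append ν f i hνf hf (ih _ ?_ ν rfl)
  have hsum : ∑ j, (d (mul ν f)).toAdd j = ∑ j, (d ν).toAdd j + 1 := by
    rw [h.d_mul _ _ hνf, hf, toAdd_mul, egen, toAdd_ofAdd]
    simp [Finset.sum_add_distrib]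
  have hpos : 0 ≤ ∑ j, (d ν).toAdd j := Finset.sum_nonneg fun j _ => h.d_mem ν j
  omega

/-- The degree of an edge below a generator is either trivial or that generator. -/
theorem eq_one_or_eq_egen {g : Multiplicative (Fin k → ℤ)} (hg : g ∈ posCone k) {i : Fin k}
    (hi : g.toAdd ≤ Pi.single i 1) : g = 1 ∨ g = egen k i := by
  have hzero : ∀ j, j ≠ i → g.toAdd j = 0 := fun j hj =>
    le_antisymm (by simpa [hj] using hi j) (hg j)
  have h0 : 0 ≤ g.toAdd i := hg i
  have h1 : g.toAdd i ≤ 1 := by simpa using hi i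
  have hsingle : g.toAdd = Pi.single i (g.toAdd i) := by
    funext j
    rcases eq_or_ne j i with rfl | hj
    · simp
    · simp [hj, hzero j hj]
  rcases (by omega : g.toAdd i = 0 ∨ g.toAdd i = 1) with h | h <;> rw [h] at hsingle
  · left
    simpa using hsingle
  · exact Or.inr hsingle

end PositiveCone

/-- Lemma 8.1: a product system of graphs over `ℕ^k` is finitely aligned iff `MCE(μ,ν)` is
finite for all pairs of edges `μ ∈ E¹_{e_i}`, `ν ∈ E¹_{e_j}` with `i ≠ j`. -/
theorem stmt1 {k : ℕ} {Λ : Type*}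
    (d : Λ → Multiplicative (Fin k → ℤ)) (src rng : Λ → Λ) (mul : Λ → Λ → Λ)
    (hPS : IsProductSystem (posCone k) d src rng mul) :
    FinitelyAligned (posCone k) d src rng mul ↔
      ∀ i j : Fin k, i ≠ j → ∀ μ ν : Λ, d μ = egen k i → d ν = egen k j →
        (MCE (posCone k) d src rng mul μ ν).Finite := by
  refine ⟨fun h _ _ _ μ ν _ _ => h μ ν, fun H => ?_⟩
  have vertex_left : ∀ v ν, d v = 1 → (MCE (posCone k) d src rng mul v ν).Finite :=
    fun v ν hv => MCE_finite_of_le hPS (by rw [hv]; exact hPS.d_mem ν)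
  have gen_gen : ∀ f α i j, d f = egen k i → (d α).toAdd ≤ Pi.single j 1 →
      (MCE (posCone k) d src rng mul f α).Finite := by
    intro f α i j hf hα
    rcases eq_one_or_eq_egen (hPS.d_mem α) hα with hα | hα
    · rw [MCE_comm]
      exact vertex_left α f hα
    · rcases eq_or_ne i j with rfl | hij
      · exact MCE_finite_of_le hPS (by rw [hf, hα])
      · exact H i j hij f α hf hα
  have gen_right : ∀ f j, d f = egen k j → ∀ μ, (MCE (posCone k) d src rng mul μ f).Finite := by
    intro f j hf
    refine hPS.induction_right (fun v hv => vertex_left v f hv) fun μ g i hμg hg ih => ?_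
    refine MCE_mul_finite hPS hμg ih fun α hα => gen_gen g α i j hg ?_
    rw [hα, hf]
    intro l
    have h1 : 0 ≤ (d μ).toAdd l := hPS.d_mem μ l
    have h2 : 0 ≤ (Pi.single j 1 : Fin k → ℤ) l :=
      (Pi.single_nonneg.2 zero_le_one : (0 : Fin k → ℤ) ≤ Pi.single j 1) l
    simp only [egen, toAdd_ofAdd, Pi.sub_apply, Pi.sup_apply]
    omega
  intro μ ν
  refine hPS.induction_right (C := fun μ => (MCE (posCone k) d src rng mul μ ν).Finite)
    (fun v hv => vertex_left v ν hv) (fun μ f i hμf hf ih => ?_) μ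
  refine MCE_mul_finite hPS hμf ih fun α _ => ?_
  rw [MCE_comm]
  exact gen_right f i hf α

end PSG
end
end

section
/- Let E = (E⁰, E¹, r, s) be a countable directed graph and H a complex Hilbert space. Let {P_v : v ∈ E⁰} be mutually orthogonal projections on H and {S_λ : λ ∈ E¹} bounded operators on H with S_λ* S_λ = P_{r(λ)} for all λ and ∑_{λ∈F} S_λ S_λ* ≤ P_v for every v ∈ E⁰ and every finite F ⊆ s⁻¹(v). Then: (1) for every bounded operator T on H and every h ∈ H, the family (S_λ T S_λ* h)_{λ∈E¹} is summable in H; (2) setting α(T)h := ∑_{λ∈E¹} S_λ T S_λ* h defines a bounded operator α(T) with ‖α(T)‖ ≤ ‖T‖; (3) α maps the commutant of {P_v : v ∈ E⁰} into itself and is a *-homomorphism on this commutant; (4) if T lies in this commutant, then α(T) S_λ = S_λ T for every λ ∈ E¹, and α(T)h = 0 whenever S_λ* h = 0 for all λ ∈ E¹. -/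
open scoped Classical

noncomputable section

namespace PSG

section GraphFamilies

variable {V E H : Type*} [NormedAddCommGroup H] [InnerProductSpace ℂ H] [CompleteSpace H]

/-- An operator whose initial operator `S* S` is an idempotent `p` is fixed by `p` on the right. -/
lemma mul_eq_self_of_star_mul_self {S p : H →L[ℂ] H} (hp : p * p = p) (hS : star S * S = p) :
    S * p = S := by
  have hsa : star p = p := by rw [← hS]; simp
  have h0 : star (S - S * p) * (S - S * p) = 0 := by
    have : star (S - S * p) * (S - S * p) =
        star S * S - (star S * S) * p - star p * (star S * S) + star p * (star S * S) * p := by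
      rw [star_sub, star_mul]; noncomm_ring
    rw [this, hS, hsa, hp, hp]; simp
  exact (sub_eq_zero.mp (CStarRing.star_mul_self_eq_zero_iff _ |>.mp h0)).symm

lemma inner_star_left (S : H →L[ℂ] H) (x y : H) :
    inner ℂ (star S x) y = inner ℂ x (S y) := by
  rw [ContinuousLinearMap.star_eq_adjoint, ContinuousLinearMap.adjoint_inner_left]

lemma re_inner_mul_star_apply (S : H →L[ℂ] H) (x : H) :
    (inner ℂ ((S * star S) x) x).re = ‖star S x‖ ^ 2 := by
  have h := inner_star_left (star S) (star S x) x
  rw [star_star] at h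
  rw [mul_apply_eq_comp, h]
  exact inner_self_eq_norm_sq (𝕜 := ℂ) _

lemma re_inner_projection_apply {p : H →L[ℂ] H} (hsa : IsSelfAdjoint p) (hp : p * p = p) (x : H) :
    (inner ℂ (p x) x).re = ‖p x‖ ^ 2 := by
  have h := re_inner_mul_star_apply p x
  rwa [hsa.star_eq, hp] at h

lemma norm_apply_eq_of_star_mul_self {S p : H →L[ℂ] H} (hsa : IsSelfAdjoint p) (hp : p * p = p)
    (hS : star S * S = p) (x : H) : ‖S x‖ ^ 2 = ‖p x‖ ^ 2 := by
  rw [← re_inner_projection_apply hsa hp, ← hS, mul_apply_eq_comp, inner_star_left]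
  exact (inner_self_eq_norm_sq (𝕜 := ℂ) _).symm

lemma norm_projection_apply_le {p : H →L[ℂ] H} (hsa : IsSelfAdjoint p) (hp : p * p = p) (x : H) :
    ‖p x‖ ≤ ‖x‖ := by
  have h1 := re_inner_projection_apply hsa hp x
  have h2 : (inner ℂ (p x) x).re ≤ ‖p x‖ * ‖x‖ := re_inner_le_norm (𝕜 := ℂ) _ _
  by_contra! h
  nlinarith [norm_nonneg x]

lemma sum_norm_sq_star_apply_le {p : H →L[ℂ] H} (hsa : IsSelfAdjoint p) (hp : p * p = p)
    {S : E → H →L[ℂ] H} {F : Finset E} (hF : (∑ l ∈ F, S l * star (S l)) ≤ p) (x : H) :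
    ∑ l ∈ F, ‖star (S l) x‖ ^ 2 ≤ ‖p x‖ ^ 2 := by
  have h := (ContinuousLinearMap.le_def _ _ |>.mp hF).re_inner_nonneg_left x
  rw [← re_inner_projection_apply hsa hp]
  simp only [← re_inner_mul_star_apply]
  simpa [sum_apply, sum_inner, inner_sub_left] using h

lemma star_mul_eq_self_of_mul_star_le {S p : H →L[ℂ] H} (hsa : IsSelfAdjoint p) (hp : p * p = p)
    (hS : S * star S ≤ p) : star S * p = star S := by
  ext x
  have h := sum_norm_sq_star_apply_le (S := fun _ : Unit => S) (F := {()}) hsa hp (by simpa)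
    (p x - x)
  have h0 : p (p x - x) = 0 := by
    rw [map_sub, ← mul_apply_eq_comp, hp, sub_self]
  have h1 : star S (p x - x) = 0 := by
    simpa [h0, -map_sub] using h
  simpa [sub_eq_zero] using h1

/-- Two distinct members of a Toeplitz–Cuntz–Krieger family have orthogonal ranges. -/
lemma star_mul_eq_zero_of_ne {r s : E → V} {P : V → H →L[ℂ] H} {S : E → H →L[ℂ] H}
    (hsa : ∀ v, IsSelfAdjoint (P v)) (hidem : ∀ v, P v * P v = P v)
    (horth : ∀ v w, v ≠ w → P v * P w = 0) (hiso : ∀ l, star (S l) * S l = P (r l))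
    (hdom : ∀ v : V, ∀ F : Finset E, (∀ l ∈ F, s l = v) →
      (∑ l ∈ F, S l * star (S l)) ≤ P v) {l m : E} (hlm : l ≠ m) :
    star (S l) * S m = 0 := by
  have hle (l : E) : S l * star (S l) ≤ P (s l) := by simpa using hdom (s l) {l} (by simp)
  by_cases hs : s l = s m
  · ext x
    have h := sum_norm_sq_star_apply_le (hsa (s m)) (hidem _)
      (hdom (s m) {l, m} (by simp [hs])) (S m x)
    rw [Finset.sum_pair hlm] at h
    have h1 : star (S m) (S m x) = P (r m) x := by
      rw [← hiso, mul_apply_eq_comp]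
    have h2 := norm_apply_eq_of_star_mul_self (hsa _) (hidem _) (hiso m) x
    have h3 := norm_projection_apply_le (hsa (s m)) (hidem _) (S m x)
    rw [h1, ← h2] at h
    have h4 : ‖star (S l) (S m x)‖ ^ 2 ≤ 0 := by
      nlinarith [norm_nonneg (P (s m) (S m x))]
    simpa using h4
  · have hm := congrArg star (star_mul_eq_self_of_mul_star_le (hsa _) (hidem _) (hle m))
    rw [star_mul, star_star, (hsa _).star_eq] at hm
    rw [← star_mul_eq_self_of_mul_star_le (hsa _) (hidem _) (hle l), ← hm, mul_assoc,
      ← mul_assoc (P _), horth _ _ hs]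
    simp

section OrthogonalRanges

variable {S : E → H →L[ℂ] H}

lemma orthogonalFamily_range (horth : ∀ l m, l ≠ m → star (S l) * S m = 0) :
    OrthogonalFamily ℂ (fun l => (S l).range)
      fun l => (S l).range.subtypeₗᵢ := by
  rintro l m hlm ⟨-, x, rfl⟩ ⟨-, y, rfl⟩
  have h := inner_star_left (star (S l)) x (S m y)
  rw [star_star, ← mul_apply_eq_comp, horth l m hlm] at h
  simpa using h

lemma norm_sq_sum_apply (horth : ∀ l m, l ≠ m → star (S l) * S m = 0) (x : E → H)
    (F : Finset E) : ‖∑ l ∈ F, S l (x l)‖ ^ 2 = ∑ l ∈ F, ‖S l (x l)‖ ^ 2 :=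
  (orthogonalFamily_range horth).norm_sum (fun l => ⟨S l (x l), x l, rfl⟩) F

lemma summable_apply_of_summable_norm_sq (horth : ∀ l m, l ≠ m → star (S l) * S m = 0)
    {x : E → H} (hx : Summable fun l => ‖S l (x l)‖ ^ 2) : Summable fun l => S l (x l) :=
  ((orthogonalFamily_range horth).summable_iff_norm_sq_summable
    fun l => ⟨S l (x l), x l, rfl⟩).mpr hx

/-- Bessel's inequality for partial isometries with mutually orthogonal ranges. -/
lemma sum_norm_sq_star_apply_le_norm_sq (horth : ∀ l m, l ≠ m → star (S l) * S m = 0)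
    (hpi : ∀ l, S l * star (S l) * S l = S l) (F : Finset E) (x : H) :
    ∑ l ∈ F, ‖star (S l) x‖ ^ 2 ≤ ‖x‖ ^ 2 := by
  have hproj (l : E) : ‖S l (star (S l) x)‖ ^ 2 = ‖star (S l) x‖ ^ 2 := by
    have hp : (S l * star (S l)) * (S l * star (S l)) = S l * star (S l) := by
      rw [← mul_assoc, hpi]
    have h := re_inner_projection_apply (IsSelfAdjoint.mul_star_self (S l)) hp x
    rw [re_inner_mul_star_apply] at h
    exact h.symm
  set y := ∑ l ∈ F, S l (star (S l) x) with hy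
  have h1 : ‖y‖ ^ 2 = ∑ l ∈ F, ‖star (S l) x‖ ^ 2 := by
    rw [hy, norm_sq_sum_apply horth fun l => star (S l) x]
    exact Finset.sum_congr rfl fun l _ => hproj l
  have h2 : (inner ℂ y x).re = ∑ l ∈ F, ‖star (S l) x‖ ^ 2 := by
    rw [hy, sum_inner, Complex.re_sum]
    exact Finset.sum_congr rfl fun l _ => re_inner_mul_star_apply (S l) x
  have h3 : (inner ℂ y x).re ≤ ‖y‖ * ‖x‖ := re_inner_le_norm (𝕜 := ℂ) _ _
  rw [← h1]
  have h4 : ‖y‖ ≤ ‖x‖ := by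
    by_contra! h
    nlinarith [norm_nonneg x]
  gcongr

lemma sum_norm_sq_conj_apply_le (horth : ∀ l m, l ≠ m → star (S l) * S m = 0)
    (hpi : ∀ l, S l * star (S l) * S l = S l) (hcontr : ∀ l x, ‖S l x‖ ≤ ‖x‖)
    (T : H →L[ℂ] H) (F : Finset E) (x : H) :
    ∑ l ∈ F, ‖S l (T (star (S l) x))‖ ^ 2 ≤ (‖T‖ * ‖x‖) ^ 2 := by
  calc ∑ l ∈ F, ‖S l (T (star (S l) x))‖ ^ 2
      ≤ ∑ l ∈ F, ‖T‖ ^ 2 * ‖star (S l) x‖ ^ 2 := by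
        refine Finset.sum_le_sum fun l _ => ?_
        rw [← mul_pow]
        gcongr
        exact (hcontr l _).trans (T.le_opNorm _)
    _ = ‖T‖ ^ 2 * ∑ l ∈ F, ‖star (S l) x‖ ^ 2 := by rw [Finset.mul_sum]
    _ ≤ ‖T‖ ^ 2 * ‖x‖ ^ 2 := by
        gcongr
        exact sum_norm_sq_star_apply_le_norm_sq horth hpi F x
    _ = (‖T‖ * ‖x‖) ^ 2 := (mul_pow _ _ _).symm

/-- For contractive partial isometries with mutually orthogonal ranges, `∑ S_l T S_l*` converges
strongly to an operator of norm at most `‖T‖`. -/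
lemma exists_hasSum_conj_norm_le (horth : ∀ l m, l ≠ m → star (S l) * S m = 0)
    (hpi : ∀ l, S l * star (S l) * S l = S l) (hcontr : ∀ l x, ‖S l x‖ ≤ ‖x‖)
    (T : H →L[ℂ] H) :
    ∃ A : H →L[ℂ] H, (∀ x, HasSum (fun l => S l (T (star (S l) x))) (A x)) ∧ ‖A‖ ≤ ‖T‖ := by
  have hsum (x : H) : Summable fun l => S l (T (star (S l) x)) :=
    summable_apply_of_summable_norm_sq horth <|
      summable_of_sum_le (fun _ => sq_nonneg _) fun F =>
        sum_norm_sq_conj_apply_le horth hpi hcontr T F x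
  have hbound (x : H) : ‖∑' l, S l (T (star (S l) x))‖ ≤ ‖T‖ * ‖x‖ := by
    refine le_of_tendsto (hsum x).hasSum.norm (Filter.Eventually.of_forall fun F => ?_)
    refine le_of_sq_le_sq ?_ (by positivity)
    rw [norm_sq_sum_apply horth fun l => T (star (S l) x)]
    exact sum_norm_sq_conj_apply_le horth hpi hcontr T F x
  let L : H →ₗ[ℂ] H :=
    { toFun := fun x => ∑' l, S l (T (star (S l) x))
      map_add' := fun x y => by
        simp only [map_add]
        exact (hsum x).tsum_add (hsum y)
      map_smul' := fun c x => by
        simp only [map_smul, RingHom.id_apply]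
        exact (hsum x).tsum_const_smul c }
  exact ⟨L.mkContinuous ‖T‖ hbound, fun x => (hsum x).hasSum,
    L.mkContinuous_norm_le (norm_nonneg T) hbound⟩

end OrthogonalRanges

end GraphFamilies

/-- Proposition 6.2 for a single graph: the endomorphism
`α(T) = ∑_{λ∈E¹} S_λ T S_λ*` of the commutant of `{P_v}`. -/
theorem stmt11 {V E : Type*} [Countable V] [Countable E] (r s : E → V)
    {H : Type*} [NormedAddCommGroup H] [InnerProductSpace ℂ H] [CompleteSpace H]
    (Pv : V → H →L[ℂ] H) (S : E → H →L[ℂ] H)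
    (hsa : ∀ v, IsSelfAdjoint (Pv v)) (hidem : ∀ v, Pv v * Pv v = Pv v)
    (horth : ∀ v w, v ≠ w → Pv v * Pv w = 0)
    (hiso : ∀ l, star (S l) * S l = Pv (r l))
    (hdom : ∀ v : V, ∀ F : Finset E, (∀ l ∈ F, s l = v) →
      (∑ l ∈ F, S l * star (S l)) ≤ Pv v) :
    ∃ α : (H →L[ℂ] H) → (H →L[ℂ] H),
      (∀ T : H →L[ℂ] H, ∀ h : H,
        HasSum (fun l : E => S l (T (star (S l) h))) (α T h)) ∧
      (∀ T, ‖α T‖ ≤ ‖T‖) ∧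
      (∀ T, (∀ v, Pv v * T = T * Pv v) → ∀ v, Pv v * α T = α T * Pv v) ∧
      (∀ T T', (∀ v, Pv v * T = T * Pv v) → (∀ v, Pv v * T' = T' * Pv v) →
        α (T * T') = α T * α T' ∧ α (T + T') = α T + α T') ∧
      (∀ T, (∀ v, Pv v * T = T * Pv v) → α (star T) = star (α T)) ∧
      (∀ T, (∀ v, Pv v * T = T * Pv v) → ∀ l, α T * S l = S l * T) ∧
      (∀ T, (∀ v, Pv v * T = T * Pv v) → ∀ h : H,
        (∀ l, star (S l) h = 0) → α T h = 0) := by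
  have hpr (l : E) : S l * Pv (r l) = S l := mul_eq_self_of_star_mul_self (hidem _) (hiso l)
  have hpi (l : E) : S l * star (S l) * S l = S l := by rw [mul_assoc, hiso, hpr]
  have hcontr (l : E) (x : H) : ‖S l x‖ ≤ ‖x‖ := by
    refine le_trans (le_of_sq_le_sq ?_ (norm_nonneg _))
      (norm_projection_apply_le (hsa (r l)) (hidem _) x)
    exact (norm_apply_eq_of_star_mul_self (hsa _) (hidem _) (hiso l) x).le
  have hSo (l m : E) (hlm : l ≠ m) : star (S l) * S m = 0 :=
    star_mul_eq_zero_of_ne hsa hidem horth hiso hdom hlm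
  have hps (l : E) : star (S l) * Pv (s l) = star (S l) :=
    star_mul_eq_self_of_mul_star_le (hsa _) (hidem _) (by simpa using hdom (s l) {l} (by simp))
  have hsp (l : E) : Pv (s l) * S l = S l := by
    simpa [(hsa _).star_eq] using congrArg star (hps l)
  choose α hα hnorm using exists_hasSum_conj_norm_le hSo hpi hcontr
  have hαS (T : H →L[ℂ] H) (hT : ∀ v, Pv v * T = T * Pv v) (l : E) :
      α T * S l = S l * T := by
    ext x
    have h1 : HasSum (fun m => S m (T (star (S m) (S l x)))) (S l (T (star (S l) (S l x)))) := by
      refine hasSum_single l fun m hm => ?_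
      rw [← mul_apply_eq_comp (star (S m)), hSo m l hm]
      simp
    have h2 : S l * (T * (star (S l) * S l)) = S l * T := by
      rw [hiso, ← hT, ← mul_assoc, hpr]
    exact ((hα T (S l x)).unique h1).trans (congrArg (fun A : H →L[ℂ] H => A x) h2)
  refine ⟨α, hα, hnorm, fun T _ v => ?_, fun T T' hT _ => ⟨?_, ?_⟩, fun T _ => ?_, hαS,
    fun T _ h hh => ?_⟩
  · have hv (l : E) : Pv v * (S l * T * star (S l)) = S l * T * star (S l) * Pv v := by
      by_cases hl : s l = v
      · subst hl
        rw [mul_assoc (S l * T), hps, ← mul_assoc, ← mul_assoc, hsp]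
      · rw [← hsp l, star_mul, (hsa _).star_eq]
        simp only [mul_assoc, horth _ _ hl]
        rw [← mul_assoc (Pv v), horth _ _ (Ne.symm hl)]
        simp
    ext x
    refine ((hα T x).mapL (Pv v)).unique ?_
    refine (hα T (Pv v x)).congr_fun fun l => ?_
    exact congrArg (fun A : H →L[ℂ] H => A x) (hv l)
  · ext x
    refine (hα (T * T') x).unique (((hα T' x).mapL (α T)).congr_fun fun l => ?_)
    exact (congrArg (fun A : H →L[ℂ] H => A (T' (star (S l) x))) (hαS T hT l)).symm
  · ext x
    refine (hα (T + T') x).unique (((hα T x).add (hα T' x)).congr_fun fun l => ?_)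
    simp
  · ext x
    refine ext_inner_left ℂ fun y => ?_
    have h1 := (hα (star T) x).mapL (innerSL ℂ y)
    have h2 := ((hα T y).mapL (innerSL ℂ x)).star
    have hy : inner ℂ y (star (α T) x) = star (inner ℂ x (α T y)) := by
      rw [← inner_star_left, star_star]
      exact (inner_conj_symm (𝕜 := ℂ) _ _).symm
    rw [hy]
    refine h1.unique (h2.congr_fun fun l => ?_)
    have hstar : star (S l * T * star (S l)) = S l * star T * star (S l) := by
      simp [mul_assoc]
    have h3 := inner_star_left (S l * T * star (S l)) x y
    rw [hstar] at h3
    refine (inner_conj_symm (𝕜 := ℂ) y _).symm.trans ?_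
    exact congrArg star h3
  · refine (hα T h).unique ?_
    simp [hh]

end PSG
end
end
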